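/- arXiv:math/0506205 — 2 statements merged into one kernel-verified Lean document; each statement's English description precedes it below -/
import Mathlib

section
/- For every real number x ∈ (0, 1], Kurepa's function satisfies K(x) ≤ (9/5)·x. -/
open MeasureTheory Set

/-- Kurepa's function for real `x`:
`K(x) = ∫₀^∞ e^{-t} (t^x - 1)/(t - 1) dt`. -/
noncomputable def kurepa (x : ℝ) : ℝ :=
  ∫ t in Ioi (0 : ℝ), Real.exp (-t) * ((t ^ x - 1) / (t - 1))

/-!
Let `q` be the slope `(t ^ x - 1) / (t - 1)`, with `0 ≤ x ≤ 1`. For `1 ≤ t`, Bernoulli's inequality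
with exponent `x` gives `q ≤ x`. For `t ≤ 1`, the chord bound `exp (-t) ≤ (1 - t) + t * exp (-1)`
reduces the problem to `(1 - t) * q = 1 - t ^ x ≤ -x * log t` and to `t * q ≤ x`, which is
Bernoulli's inequality with exponent `1 + x`. Integrating over `(0, 1]` and `(1, ∞)` gives
`K(x) ≤ x * (1 + exp (-1)) + x * exp (-1)`, and `1 + 2 / e < 9 / 5`.
-/

section Pointwise

variable {t x : ℝ}

lemma exp_mul_le_one_sub_add_mul_exp (a : ℝ) (ht₀ : 0 ≤ t) (ht₁ : t ≤ 1) :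
    Real.exp (t * a) ≤ (1 - t) + t * Real.exp a := by
  simpa using convexOn_exp.2 (mem_univ 0) (mem_univ a) (sub_nonneg.2 ht₁) ht₀ (by ring)

lemma one_sub_rpow_le_neg_mul_log (ht : 0 < t) : 1 - t ^ x ≤ -(x * Real.log t) := by
  have := Real.add_one_le_exp (Real.log t * x)
  rw [← Real.rpow_def_of_pos ht] at this
  linarith

lemma rpow_sub_one_div_sub_one_nonneg (hx : 0 ≤ x) (ht : 0 ≤ t) :
    0 ≤ (t ^ x - 1) / (t - 1) := by
  rcases le_total t 1 with h | h
  · exact div_nonneg_of_nonpos (sub_nonpos.2 (Real.rpow_le_one ht h hx)) (sub_nonpos.2 h)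
  · exact div_nonneg (sub_nonneg.2 (Real.one_le_rpow h hx)) (sub_nonneg.2 h)

lemma rpow_sub_one_div_sub_one_le (hx₀ : 0 ≤ x) (hx₁ : x ≤ 1) (ht : 1 ≤ t) :
    (t ^ x - 1) / (t - 1) ≤ x := by
  have bernoulli : t ^ x ≤ 1 + x * (t - 1) := by
    simpa using rpow_one_add_le_one_add_mul_self (s := t - 1) (by linarith) hx₀ hx₁
  exact div_le_of_le_mul₀ (sub_nonneg.2 ht) hx₀ (by linarith)

lemma one_sub_mul_rpow_sub_one_div_sub_one :
    (1 - t) * ((t ^ x - 1) / (t - 1)) = 1 - t ^ x := by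
  rcases eq_or_ne t 1 with rfl | ht
  · simp
  · have : t - 1 ≠ 0 := sub_ne_zero.2 ht
    field_simp
    ring

lemma mul_rpow_sub_one_div_sub_one_le (hx : 0 ≤ x) (ht₀ : 0 ≤ t) (ht₁ : t ≤ 1) :
    t * ((t ^ x - 1) / (t - 1)) ≤ x := by
  have bernoulli : 1 + (1 + x) * (t - 1) ≤ t * t ^ x := by
    have := one_add_mul_self_le_rpow_one_add (s := t - 1) (p := 1 + x) (by linarith) (by linarith)
    rwa [add_sub_cancel, Real.rpow_one_add' ht₀ (by linarith)] at this
  rw [← mul_div_assoc, ← neg_div_neg_eq]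
  exact div_le_of_le_mul₀ (by linarith) hx (by linarith)

end Pointwise

section Integration

lemma integrableOn_of_nonneg_of_le {α : Type*} [MeasurableSpace α] {μ : Measure α} {s : Set α}
    {f g : α → ℝ} (hs : MeasurableSet s) (hf : AEStronglyMeasurable f (μ.restrict s))
    (hg : IntegrableOn g s μ) (hf₀ : ∀ a ∈ s, 0 ≤ f a) (hfg : ∀ a ∈ s, f a ≤ g a) :
    IntegrableOn f s μ :=
  Integrable.mono' hg hf <| ae_restrict_of_forall_mem hs fun a ha ↦ by
    rw [Real.norm_of_nonneg (hf₀ a ha)]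
    exact hfg a ha

lemma integrableOn_neg_log_add_const_Ioc (a b c : ℝ) :
    IntegrableOn (fun t ↦ -Real.log t + c) (Ioc a b) :=
  (intervalIntegral.intervalIntegrable_log'.neg.add intervalIntegrable_const).1

lemma setIntegral_neg_log_add_const_Ioc {b : ℝ} (hb : 0 ≤ b) (c : ℝ) :
    ∫ t in Ioc 0 b, (-Real.log t + c) = b * (1 + c - Real.log b) := by
  rw [← intervalIntegral.integral_of_le hb,
    intervalIntegral.integral_add (f := fun t ↦ -Real.log t)
      intervalIntegral.intervalIntegrable_log'.neg intervalIntegrable_const,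
    intervalIntegral.integral_neg, integral_log, intervalIntegral.integral_const, smul_eq_mul]
  ring

end Integration

/-- The integrand `e^{-t} (t^x - 1)/(t - 1)` of Kurepa's function. At `t = 1` it takes the junk
value `0` instead of the limit `x / e`, which affects no integral. -/
noncomputable def kurepaIntegrand (x t : ℝ) : ℝ :=
  Real.exp (-t) * ((t ^ x - 1) / (t - 1))

section Integrand

variable {t x : ℝ}

lemma measurable_kurepaIntegrand (x : ℝ) : Measurable (kurepaIntegrand x) := by
  unfold kurepaIntegrand
  fun_prop

lemma kurepaIntegrand_nonneg (hx : 0 ≤ x) (ht : 0 ≤ t) : 0 ≤ kurepaIntegrand x t :=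
  mul_nonneg (Real.exp_pos _).le (rpow_sub_one_div_sub_one_nonneg hx ht)

lemma kurepaIntegrand_le_of_le_one (hx : 0 ≤ x) (ht₀ : 0 < t) (ht₁ : t ≤ 1) :
    kurepaIntegrand x t ≤ x * (-Real.log t + Real.exp (-1)) := by
  set q := (t ^ x - 1) / (t - 1) with hq
  have hq₀ : 0 ≤ q := rpow_sub_one_div_sub_one_nonneg hx ht₀.le
  have chord : Real.exp (-t) ≤ (1 - t) + t * Real.exp (-1) := by
    simpa using exp_mul_le_one_sub_add_mul_exp (-1) ht₀.le ht₁
  calc kurepaIntegrand x t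
      ≤ ((1 - t) + t * Real.exp (-1)) * q := mul_le_mul_of_nonneg_right chord hq₀
    _ = (1 - t ^ x) + Real.exp (-1) * (t * q) := by
        rw [← one_sub_mul_rpow_sub_one_div_sub_one, ← hq]
        ring
    _ ≤ -(x * Real.log t) + Real.exp (-1) * x := by
        gcongr
        · exact one_sub_rpow_le_neg_mul_log ht₀
        · exact mul_rpow_sub_one_div_sub_one_le hx ht₀.le ht₁
    _ = x * (-Real.log t + Real.exp (-1)) := by ring

lemma kurepaIntegrand_le_of_one_le (hx₀ : 0 ≤ x) (hx₁ : x ≤ 1) (ht : 1 ≤ t) :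
    kurepaIntegrand x t ≤ x * Real.exp (-t) := by
  rw [mul_comm x]
  exact mul_le_mul_of_nonneg_left (rpow_sub_one_div_sub_one_le hx₀ hx₁ ht) (Real.exp_pos _).le

end Integrand

section Integral

variable {x : ℝ}

lemma integrableOn_kurepaIntegrand_Ioc (hx : 0 ≤ x) :
    IntegrableOn (kurepaIntegrand x) (Ioc 0 1) :=
  integrableOn_of_nonneg_of_le measurableSet_Ioc (measurable_kurepaIntegrand x).aestronglyMeasurable
    ((integrableOn_neg_log_add_const_Ioc 0 1 (Real.exp (-1))).const_mul x)
    (fun _ ht ↦ kurepaIntegrand_nonneg hx ht.1.le)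
    fun _ ht ↦ kurepaIntegrand_le_of_le_one hx ht.1 ht.2

lemma integrableOn_kurepaIntegrand_Ioi (hx₀ : 0 ≤ x) (hx₁ : x ≤ 1) :
    IntegrableOn (kurepaIntegrand x) (Ioi 1) :=
  integrableOn_of_nonneg_of_le measurableSet_Ioi (measurable_kurepaIntegrand x).aestronglyMeasurable
    ((integrableOn_exp_neg_Ioi 1).const_mul x)
    (fun _ ht ↦ kurepaIntegrand_nonneg hx₀ (zero_le_one.trans (le_of_lt ht)))
    fun _ ht ↦ kurepaIntegrand_le_of_one_le hx₀ hx₁ (le_of_lt ht)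

lemma setIntegral_kurepaIntegrand_Ioc_le (hx : 0 ≤ x) :
    ∫ t in Ioc 0 1, kurepaIntegrand x t ≤ x * (1 + Real.exp (-1)) := by
  calc ∫ t in Ioc 0 1, kurepaIntegrand x t
      ≤ ∫ t in Ioc 0 1, x * (-Real.log t + Real.exp (-1)) :=
        setIntegral_mono_on (integrableOn_kurepaIntegrand_Ioc hx)
          ((integrableOn_neg_log_add_const_Ioc _ _ _).const_mul x) measurableSet_Ioc
          fun _ ht ↦ kurepaIntegrand_le_of_le_one hx ht.1 ht.2
    _ = x * (1 + Real.exp (-1)) := by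
        simp [integral_const_mul, setIntegral_neg_log_add_const_Ioc zero_le_one]

lemma setIntegral_kurepaIntegrand_Ioi_le (hx₀ : 0 ≤ x) (hx₁ : x ≤ 1) :
    ∫ t in Ioi 1, kurepaIntegrand x t ≤ x * Real.exp (-1) := by
  calc ∫ t in Ioi 1, kurepaIntegrand x t
      ≤ ∫ t in Ioi 1, x * Real.exp (-t) :=
        setIntegral_mono_on (integrableOn_kurepaIntegrand_Ioi hx₀ hx₁)
          ((integrableOn_exp_neg_Ioi 1).const_mul x) measurableSet_Ioi
          fun _ ht ↦ kurepaIntegrand_le_of_one_le hx₀ hx₁ (le_of_lt ht)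
    _ = x * Real.exp (-1) := by rw [integral_const_mul, integral_exp_neg_Ioi]

lemma kurepa_eq_setIntegral_Ioc_add_setIntegral_Ioi (hx₀ : 0 ≤ x) (hx₁ : x ≤ 1) :
    kurepa x = (∫ t in Ioc 0 1, kurepaIntegrand x t) + ∫ t in Ioi 1, kurepaIntegrand x t := by
  rw [← setIntegral_union (Ioc_disjoint_Ioi le_rfl) measurableSet_Ioi
    (integrableOn_kurepaIntegrand_Ioc hx₀) (integrableOn_kurepaIntegrand_Ioi hx₀ hx₁),
    Ioc_union_Ioi_eq_Ioi zero_le_one]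
  rfl

lemma kurepa_le_one_add_two_mul_exp_neg_one_mul (hx₀ : 0 ≤ x) (hx₁ : x ≤ 1) :
    kurepa x ≤ (1 + 2 * Real.exp (-1)) * x := by
  rw [kurepa_eq_setIntegral_Ioc_add_setIntegral_Ioi hx₀ hx₁]
  linarith [setIntegral_kurepaIntegrand_Ioc_le hx₀, setIntegral_kurepaIntegrand_Ioi_le hx₀ hx₁]

end Integral

/-- For `x ∈ (0,1]`, Kurepa's function satisfies `K(x) ≤ (9/5) x`. -/
theorem kurepa_le_nine_fifths_mul (x : ℝ) (hx : x ∈ Set.Ioc (0 : ℝ) 1) :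
    kurepa x ≤ (9 / 5) * x := by
  have const_le : 1 + 2 * Real.exp (-1) ≤ 9 / 5 := by linarith [Real.exp_neg_one_lt_d9]
  exact (kurepa_le_one_add_two_mul_exp_neg_one_mul hx.1.le hx.2).trans
    (mul_le_mul_of_nonneg_right const_le hx.1.le)
end

section
/- For every real number x ≥ 3, Kurepa's function satisfies K(x) ≤ 2·Γ(x) (equivalently, K(x − 1) ≤ Γ(x)), with equality when x = 3, i.e., K(3) = 2·Γ(3). -/
open MeasureTheory Set

/-!
Write `q_x(t) = (t ^ x - 1) / (t - 1)`. Since `q_{x+1}(t) = q_x(t) + t ^ x`, Kurepa's function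
satisfies `K(x) = K(x - 1) + Γ(x)`, and it suffices to show `K(x - 1) ≤ Γ(x)`. With `p = x - 2`,
`t ^ (p + 1) - q_{p+1}(t) = t (t - 2) q_p(t) + (t - 1)`. When `t ^ p` is convex its secant slope
`q_p` is increasing, so `q_p(t)` may be replaced by `q_p(2)` at the cost of decreasing the right
side. What is left, `q_p(2) (t ^ 2 - 2 t) + (t - 1)`, integrates to zero against `e ^ (-t)`.
-/

open scoped Nat

variable {x p t : ℝ}

/-- The quotient integrated against `e ^ (-t)` in Kurepa's function. Its value at `t = 1` is `0`
instead of the limit `x`, which the integral does not see. -/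
noncomputable def rpowQuotient (x t : ℝ) : ℝ :=
  (t ^ x - 1) / (t - 1)

theorem rpowQuotient_zero (t : ℝ) : rpowQuotient 0 t = 0 := by
  simp [rpowQuotient]

theorem measurable_rpowQuotient (x : ℝ) : Measurable (rpowQuotient x) := by
  unfold rpowQuotient
  fun_prop

theorem rpowQuotient_add_one (x : ℝ) (ht : 0 < t) (ht1 : t ≠ 1) :
    rpowQuotient (x + 1) t = rpowQuotient x t + t ^ x := by
  have ht1' : t - 1 ≠ 0 := sub_ne_zero.mpr ht1
  simp only [rpowQuotient, Real.rpow_add_one ht.ne']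
  field_simp
  ring

theorem monotone_rpowQuotient_left (ht : 0 < t) : Monotone (rpowQuotient · t) := by
  intro x y hxy
  rcases le_total t 1 with h | h
  · exact div_le_div_of_nonpos_of_le (by linarith)
      (sub_le_sub_right (Real.rpow_le_rpow_of_exponent_ge ht h hxy) 1)
  · exact div_le_div_of_nonneg_right
      (sub_le_sub_right (Real.rpow_le_rpow_of_exponent_le h hxy) 1) (by linarith)

theorem rpowQuotient_nonneg (hx : 0 ≤ x) (ht : 0 < t) : 0 ≤ rpowQuotient x t :=
  (rpowQuotient_zero t).symm.trans_le (monotone_rpowQuotient_left ht hx)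

theorem rpowQuotient_eq_slope (x t : ℝ) : rpowQuotient x t = slope (fun s : ℝ ↦ s ^ x) 1 t := by
  rw [slope_def_field, Real.one_rpow, rpowQuotient]

theorem monotoneOn_rpowQuotient_of_convexOn (hp : ConvexOn ℝ (Ioi 0) fun s : ℝ ↦ s ^ p) :
    MonotoneOn (rpowQuotient p) (Ioi 0 \ {1}) :=
  (hp.slope_mono (mem_Ioi.mpr one_pos)).congr fun t _ ↦ (rpowQuotient_eq_slope p t).symm

theorem convexOn_rpow_of_nonpos (hp : p ≤ 0) : ConvexOn ℝ (Ioi 0) fun s : ℝ ↦ s ^ p := by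
  have hlog : ConvexOn ℝ (Ioi 0) fun s : ℝ ↦ p * Real.log s := by
    simpa using strictConcaveOn_log_Ioi.concaveOn.neg.smul (neg_nonneg.mpr hp)
  have hexp : ConvexOn ℝ (Ioi 0) fun s : ℝ ↦ Real.exp (p * Real.log s) :=
    ⟨convex_Ioi 0, fun _ hs _ ht _ _ ha hb hab ↦
      (Real.exp_monotone (hlog.2 hs ht ha hb hab)).trans
        (convexOn_exp.2 (mem_univ _) (mem_univ _) ha hb hab)⟩
  exact hexp.congr fun s hs ↦ by simp only [Real.rpow_def_of_pos hs, mul_comm]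

theorem convexOn_rpow_Ioi (hp : p ≤ 0 ∨ 1 ≤ p) : ConvexOn ℝ (Ioi 0) fun s : ℝ ↦ s ^ p :=
  hp.elim convexOn_rpow_of_nonpos fun h ↦
    (convexOn_rpow h).subset Ioi_subset_Ici_self (convex_Ioi 0)

theorem rpowQuotient_add_one_add_le_rpow (hp : ConvexOn ℝ (Ioi 0) fun s : ℝ ↦ s ^ p)
    (ht : 0 < t) (ht1 : t ≠ 1) :
    rpowQuotient (p + 1) t + (rpowQuotient p 2 * (t ^ 2 - 2 * t) + (t - 1)) ≤ t ^ (p + 1) := by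
  have hmono : 0 ≤ (t - 2) * (rpowQuotient p t - rpowQuotient p 2) := by
    have ht_mem : t ∈ Ioi (0 : ℝ) \ {1} := ⟨ht, ht1⟩
    have two_mem : (2 : ℝ) ∈ Ioi (0 : ℝ) \ {1} := by simp
    rcases le_total t 2 with h | h
    · exact mul_nonneg_of_nonpos_of_nonpos (sub_nonpos.mpr h)
        (sub_nonpos.mpr (monotoneOn_rpowQuotient_of_convexOn hp ht_mem two_mem h))
    · exact mul_nonneg (sub_nonneg.mpr h)
        (sub_nonneg.mpr (monotoneOn_rpowQuotient_of_convexOn hp two_mem ht_mem h))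
  have hrpow : t ^ p = 1 + (t - 1) * rpowQuotient p t := by
    rw [rpowQuotient, mul_div_cancel₀ _ (sub_ne_zero.mpr ht1)]
    ring
  rw [rpowQuotient_add_one p ht ht1, Real.rpow_add_one ht.ne', hrpow]
  linarith [mul_nonneg ht.le hmono]

theorem integrableOn_exp_neg_mul_rpow (hx : -1 < x) :
    IntegrableOn (fun t : ℝ ↦ Real.exp (-t) * t ^ x) (Ioi 0) := by
  simpa using Real.GammaIntegral_convergent (s := x + 1) (by linarith)

theorem setIntegral_Ioi_exp_neg_mul_rpow (hx : -1 < x) :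
    ∫ t in Ioi (0 : ℝ), Real.exp (-t) * t ^ x = Real.Gamma (x + 1) := by
  simp [Real.Gamma_eq_integral (s := x + 1) (by linarith)]

theorem integrableOn_exp_neg_mul_pow (n : ℕ) :
    IntegrableOn (fun t : ℝ ↦ Real.exp (-t) * t ^ n) (Ioi 0) := by
  simpa using integrableOn_exp_neg_mul_rpow (x := n) (by linarith [n.cast_nonneg (α := ℝ)])

theorem setIntegral_Ioi_exp_neg_mul_pow (n : ℕ) :
    ∫ t in Ioi (0 : ℝ), Real.exp (-t) * t ^ n = n ! := by
  simpa [Real.Gamma_nat_eq_factorial] using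
    setIntegral_Ioi_exp_neg_mul_rpow (x := n) (by linarith [n.cast_nonneg (α := ℝ)])

theorem integrableOn_exp_neg_mul_sum_pow {n : ℕ} (c : Fin n → ℝ) :
    IntegrableOn (fun t : ℝ ↦ Real.exp (-t) * ∑ i, c i * t ^ (i : ℕ)) (Ioi 0) := by
  simp only [Finset.mul_sum, mul_left_comm (Real.exp _)]
  exact integrable_finsetSum _ fun i _ ↦ (integrableOn_exp_neg_mul_pow i).const_mul (c i)

theorem setIntegral_Ioi_exp_neg_mul_sum_pow {n : ℕ} (c : Fin n → ℝ) :
    ∫ t in Ioi (0 : ℝ), Real.exp (-t) * ∑ i, c i * t ^ (i : ℕ) = ∑ i, c i * (i : ℕ)! := by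
  simp only [Finset.mul_sum, mul_left_comm (Real.exp _)]
  rw [integral_finsetSum _ fun (i : Fin n) _ ↦ (integrableOn_exp_neg_mul_pow i).const_mul (c i)]
  simp only [integral_const_mul, setIntegral_Ioi_exp_neg_mul_pow]

theorem ae_restrict_Ioi_zero_ne_one :
    ∀ᵐ t : ℝ ∂volume.restrict (Ioi 0), 0 < t ∧ t ≠ 1 :=
  (ae_restrict_mem measurableSet_Ioi).and (ae_restrict_of_ae (Measure.ae_ne volume 1))

theorem exp_neg_mul_rpowQuotient_add_one_ae_eq (x : ℝ) :
    (fun t ↦ Real.exp (-t) * rpowQuotient (x + 1) t) =ᵐ[volume.restrict (Ioi 0)]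
      fun t ↦ Real.exp (-t) * rpowQuotient x t + Real.exp (-t) * t ^ x := by
  filter_upwards [ae_restrict_Ioi_zero_ne_one] with t ⟨ht, ht1⟩
  rw [rpowQuotient_add_one x ht ht1, mul_add]

theorem integrableOn_exp_neg_mul_rpowQuotient_add_one_iff (hx : -1 < x) :
    IntegrableOn (fun t ↦ Real.exp (-t) * rpowQuotient (x + 1) t) (Ioi 0) ↔
      IntegrableOn (fun t ↦ Real.exp (-t) * rpowQuotient x t) (Ioi 0) :=
  (integrable_congr (exp_neg_mul_rpowQuotient_add_one_ae_eq x)).trans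
    (integrable_add_iff_integrable_left (integrableOn_exp_neg_mul_rpow hx))

theorem integrableOn_exp_neg_mul_rpowQuotient_natCast (n : ℕ) :
    IntegrableOn (fun t ↦ Real.exp (-t) * rpowQuotient n t) (Ioi 0) := by
  induction n with
  | zero => simp [rpowQuotient_zero]
  | succ n ih =>
    rw [Nat.cast_succ, integrableOn_exp_neg_mul_rpowQuotient_add_one_iff]
    · exact ih
    · linarith [n.cast_nonneg (α := ℝ)]

theorem integrableOn_exp_neg_mul_rpowQuotient_of_nonneg (hx : 0 ≤ x) :
    IntegrableOn (fun t ↦ Real.exp (-t) * rpowQuotient x t) (Ioi 0) := by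
  have hmeas : Measurable fun t ↦ Real.exp (-t) * rpowQuotient x t :=
    Measurable.mul (by fun_prop) (measurable_rpowQuotient x)
  refine (integrableOn_exp_neg_mul_rpowQuotient_natCast ⌈x⌉₊).mono' hmeas.aestronglyMeasurable ?_
  filter_upwards [ae_restrict_mem measurableSet_Ioi] with t ht
  rw [Real.norm_of_nonneg (mul_nonneg (Real.exp_pos _).le (rpowQuotient_nonneg hx ht))]
  gcongr
  exact monotone_rpowQuotient_left ht (Nat.le_ceil x)

theorem integrableOn_exp_neg_mul_rpowQuotient (hx : -1 < x) :
    IntegrableOn (fun t ↦ Real.exp (-t) * rpowQuotient x t) (Ioi 0) :=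
  (integrableOn_exp_neg_mul_rpowQuotient_add_one_iff hx).mp
    (integrableOn_exp_neg_mul_rpowQuotient_of_nonneg (by linarith))

theorem kurepa_eq_integral_rpowQuotient (x : ℝ) :
    kurepa x = ∫ t in Ioi (0 : ℝ), Real.exp (-t) * rpowQuotient x t :=
  rfl

theorem kurepa_zero : kurepa 0 = 0 := by
  simp [kurepa]

theorem kurepa_add_one (hx : -1 < x) : kurepa (x + 1) = kurepa x + Real.Gamma (x + 1) := by
  simp only [kurepa_eq_integral_rpowQuotient]
  rw [integral_congr_ae (exp_neg_mul_rpowQuotient_add_one_ae_eq x),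
    integral_add (integrableOn_exp_neg_mul_rpowQuotient hx) (integrableOn_exp_neg_mul_rpow hx),
    setIntegral_Ioi_exp_neg_mul_rpow hx]

theorem kurepa_natCast (n : ℕ) : kurepa n = ∑ i ∈ Finset.range n, (i ! : ℝ) := by
  induction n with
  | zero => simpa using kurepa_zero
  | succ n ih =>
    rw [Nat.cast_succ, kurepa_add_one (by linarith [n.cast_nonneg (α := ℝ)]), ih,
      Real.Gamma_nat_eq_factorial, Finset.sum_range_succ]

theorem kurepa_add_one_le_Gamma_of_convexOn (hp_gt : -2 < p)
    (hp : ConvexOn ℝ (Ioi 0) fun s : ℝ ↦ s ^ p) : kurepa (p + 1) ≤ Real.Gamma (p + 2) := by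
  let c : Fin 3 → ℝ := ![-1, 1 - 2 * rpowQuotient p 2, rpowQuotient p 2]
  have hc (t : ℝ) : ∑ i, c i * t ^ (i : ℕ) = rpowQuotient p 2 * (t ^ 2 - 2 * t) + (t - 1) := by
    rw [Fin.sum_univ_three]
    change -1 * t ^ 0 + (1 - 2 * rpowQuotient p 2) * t ^ 1 + rpowQuotient p 2 * t ^ 2 = _
    ring
  have hc_integral : ∑ i, c i * (i : ℕ)! = 0 := by
    rw [Fin.sum_univ_three]
    change -1 * (0 ! : ℝ) + (1 - 2 * rpowQuotient p 2) * 1 ! + rpowQuotient p 2 * 2 ! = 0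
    rw [Nat.factorial_zero, Nat.factorial_one, Nat.factorial_two]
    push_cast
    ring
  have hq := integrableOn_exp_neg_mul_rpowQuotient (x := p + 1) (by linarith)
  have hquad := integrableOn_exp_neg_mul_sum_pow c
  calc kurepa (p + 1)
    _ = ∫ t in Ioi (0 : ℝ), (Real.exp (-t) * rpowQuotient (p + 1) t +
          Real.exp (-t) * ∑ i, c i * t ^ (i : ℕ)) := by
      rw [integral_add hq hquad, setIntegral_Ioi_exp_neg_mul_sum_pow, hc_integral, add_zero,
        kurepa_eq_integral_rpowQuotient]
    _ ≤ ∫ t in Ioi (0 : ℝ), Real.exp (-t) * t ^ (p + 1) := by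
      refine integral_mono_ae (hq.add hquad) (integrableOn_exp_neg_mul_rpow (by linarith)) ?_
      filter_upwards [ae_restrict_Ioi_zero_ne_one] with t ⟨ht, ht1⟩
      rw [← mul_add, hc]
      gcongr
      exact rpowQuotient_add_one_add_le_rpow hp ht ht1
    _ = Real.Gamma (p + 2) := by
      rw [setIntegral_Ioi_exp_neg_mul_rpow (by linarith), add_assoc, one_add_one_eq_two]

theorem kurepa_sub_one_le_Gamma (hx0 : 0 < x) (hx : x ≤ 2 ∨ 3 ≤ x) :
    kurepa (x - 1) ≤ Real.Gamma x := by
  have hconv := convexOn_rpow_Ioi (p := x - 2) (hx.imp (by intro; linarith) (by intro; linarith))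
  convert kurepa_add_one_le_Gamma_of_convexOn (by linarith) hconv using 2 <;> ring

theorem kurepa_le_two_mul_Gamma_general :
    (∀ x : ℝ, 0 < x → x ≤ 2 ∨ 3 ≤ x → kurepa x ≤ 2 * Real.Gamma x) ∧
    (∀ x : ℝ, 0 < x → x ≤ 2 ∨ 3 ≤ x → kurepa (x - 1) ≤ Real.Gamma x) ∧
    kurepa 3 = 2 * Real.Gamma 3 := by
  refine ⟨fun x hx0 hx ↦ ?_, fun x hx0 hx ↦ kurepa_sub_one_le_Gamma hx0 hx, ?_⟩
  · have hrec : kurepa x = kurepa (x - 1) + Real.Gamma x := by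
      simpa using kurepa_add_one (x := x - 1) (by linarith)
    linarith [kurepa_sub_one_le_Gamma hx0 hx]
  · calc kurepa 3
      _ = ∑ i ∈ Finset.range 3, (i ! : ℝ) := mod_cast kurepa_natCast 3
      _ = 2 * 2 ! := by norm_num [Finset.sum_range_succ, Nat.factorial]
      _ = 2 * Real.Gamma 3 := by rw [Real.Gamma_ofNat_eq_factorial 2]

/-- For `x ≥ 3`, `K(x) ≤ 2 Γ(x)` (equivalently `K(x-1) ≤ Γ(x)`),
with equality at `x = 3`. -/
theorem kurepa_le_two_mul_Gamma :
    (∀ x : ℝ, 3 ≤ x → kurepa x ≤ 2 * Real.Gamma x) ∧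
    (∀ x : ℝ, 3 ≤ x → kurepa (x - 1) ≤ Real.Gamma x) ∧
    kurepa 3 = 2 * Real.Gamma 3 :=
  have ⟨hK, hK_sub, hK_three⟩ := kurepa_le_two_mul_Gamma_general
  ⟨fun x hx ↦ hK x (by linarith) (.inr hx), fun x hx ↦ hK_sub x (by linarith) (.inr hx), hK_three⟩
end
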